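/- arXiv:1810.06864 — 5 statements merged into one kernel-verified Lean document; each statement's English description precedes it below -/
import Mathlib

section
/- Let G be a finite graph on n vertices, let k be a nonnegative integer, and let (T,β) be a tree decomposition of G in which every adhesion has at most k vertices. Let s be a node of T and let Z₁, Z₂ ⊆ β(s) with |Z₁| = |Z₂| ≤ k+1. Suppose there exist a separation (A₁,A₂) of G and a family {P_x}_{x ∈ X} of pairwise vertex-disjoint Z₁–Z₂ paths, where X = A₁ ∩ A₂, such that Z₁ ⊆ A₁, Z₂ ⊆ A₂, |X| < |Z₁|, and x ∈ V(P_x) for every x ∈ X. Then there exists a tree decomposition (T′,β′) of G in which every adhesion has at most k vertices, T′ has at most n+1 nodes, and Φ_{G,k}(T′,β′) < Φ_{G,k}(T,β). -/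
/-- A separation of a graph `G`. -/
def IsSeparation {V : Type} (G : SimpleGraph V) (A B : Set V) : Prop :=
  A ∪ B = Set.univ ∧ ∀ u v : V, G.Adj u v → u ∈ A \ B → v ∉ B \ A

/-- An (unrooted) tree decomposition of `G`. -/
structure IsTreeDecomp {V ι : Type} (G : SimpleGraph V) (T : SimpleGraph ι)
    (β : ι → Set V) : Prop where
  isTree : T.IsTree
  exists_bag : ∀ v : V, ∃ t : ι, v ∈ β t
  adj_bag : ∀ u v : V, G.Adj u v → ∃ t : ι, u ∈ β t ∧ v ∈ β t
  bag_connected : ∀ (v : V) (t₁ t₂ : ι), v ∈ β t₁ → v ∈ β t₂ →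
    ∃ p : T.Walk t₁ t₂, ∀ s ∈ p.support, v ∈ β s

/-- `Φ¹_{G,k}(T,β) = Σ_t max(0, |β(t)| − (2k+1))` (with truncated subtraction). -/
noncomputable def phi1 {V ι : Type} (k : ℕ) (β : ι → Set V) : ℕ :=
  ∑ᶠ t : ι, ((β t).ncard - (2 * k + 1))

/-- `Φ²_{G,k}(T,β) = Σ_t (2^{min(|β(t)|, 2k+1)} − 1)`. -/
noncomputable def phi2 {V ι : Type} (k : ℕ) (β : ι → Set V) : ℕ :=
  ∑ᶠ t : ι, (2 ^ min ((β t).ncard) (2 * k + 1) - 1)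

/-- `Φ_{G,k}(T,β) = 2^{2k+1}·(n+1)·Φ¹ + Φ²`. -/
noncomputable def phi {V ι : Type} (n k : ℕ) (β : ι → Set V) : ℕ :=
  2 ^ (2 * k + 1) * (n + 1) * phi1 k β + phi2 k β

namespace RefStep

inductive Anc {κ : Type} (r : κ) (p : κ → κ) (t : κ) : κ → Prop
  | refl : Anc r p t t
  | step (y : κ) : y ≠ r → Anc r p t (p y) → Anc r p t y

structure RTD {V κ : Type} (G : SimpleGraph V) (r : κ) (p : κ → κ) (d : κ → ℕ)
    (β : κ → Set V) : Prop where
  lt : ∀ x, x ≠ r → d (p x) < d x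
  bag : ∀ v, ∃ x, v ∈ β x
  adj : ∀ u v, G.Adj u v → ∃ x, u ∈ β x ∧ v ∈ β x
  top : ∀ v x y, v ∈ β x → (x = r ∨ v ∉ β (p x)) → v ∈ β y → (y = r ∨ v ∉ β (p y)) → x = y

def ptree {κ : Type} (r : κ) (p : κ → κ) : SimpleGraph κ :=
  SimpleGraph.fromRel (fun x y => x ≠ r ∧ y = p x)

section
variable {V κ : Type} {G : SimpleGraph V} {r : κ} {p : κ → κ} {d : κ → ℕ} {β : κ → Set V}

theorem anc_le (hlt : ∀ x, x ≠ r → d (p x) < d x) {t y : κ} (h : Anc r p t y) :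
    d t ≤ d y ∧ (d t = d y → t = y) := by
  induction h with
  | refl => simp
  | step y hy _ ih => have := hlt y hy; exact ⟨by omega, by omega⟩

theorem anc_trans {a b c : κ} (h1 : Anc r p a b) (h2 : Anc r p b c) : Anc r p a c := by
  induction h2 with
  | refl => exact h1
  | step y hy _ ih => exact .step y hy ih

theorem anc_parent {t : κ} (ht : t ≠ r) {y : κ} (h : Anc r p t y) : Anc r p (p t) y :=
  anc_trans (.step t ht .refl) h

theorem anc_root (hlt : ∀ x, x ≠ r → d (p x) < d x) (y : κ) : Anc r p r y := by
  induction h : d y using Nat.strong_induction_on generalizing y with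
  | _ n ih =>
    by_cases hy : y = r
    · subst hy; exact .refl
    · exact .step y hy (ih _ (h ▸ hlt y hy) _ rfl)

theorem ptree_adj_parent (hlt : ∀ x, x ≠ r → d (p x) < d x) {x : κ} (hx : x ≠ r) :
    (ptree r p).Adj x (p x) := by
  rw [ptree, SimpleGraph.fromRel_adj]
  refine ⟨fun h => ?_, Or.inl ⟨hx, rfl⟩⟩
  have := hlt x hx
  rw [← h] at this; omega

theorem ptree_conn (hlt : ∀ x, x ≠ r → d (p x) < d x) : (ptree r p).Connected := by
  have key : ∀ y, (ptree r p).Reachable y r := by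
    intro y
    have h := anc_root hlt y
    induction h with
    | refl => exact .rfl
    | step y hy _ ih => exact (ptree_adj_parent hlt hy).reachable.trans ih
  have : Nonempty κ := ⟨r⟩
  exact ⟨fun x y => (key x).trans (key y).symm⟩

theorem ptree_isTree [Finite κ] (hlt : ∀ x, x ≠ r → d (p x) < d x) : (ptree r p).IsTree := by
  have hc := ptree_conn hlt
  rw [SimpleGraph.isTree_iff_connected_and_card]
  refine ⟨hc, le_antisymm ?_ hc.card_vert_le_card_edgeSet_add_one⟩
  have h1 : Nat.card (ptree r p).edgeSet ≤ Nat.card {x : κ // x ≠ r} := by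
    refine Nat.card_le_card_of_surjective
      (fun x : {x : κ // x ≠ r} =>
        (⟨s(x.1, p x.1), ptree_adj_parent hlt x.2⟩ : (ptree r p).edgeSet)) ?_
    rintro ⟨e, he⟩
    induction e with
    | _ x y =>
      rw [SimpleGraph.mem_edgeSet, ptree, SimpleGraph.fromRel_adj] at he
      rcases he with ⟨_, ⟨h, h'⟩ | ⟨h, h'⟩⟩
      · exact ⟨⟨x, h⟩, by simp [h']⟩
      · exact ⟨⟨y, h⟩, by simp [h', Sym2.eq_swap]⟩
  have h2 : Nat.card {x : κ // x ≠ r} + 1 = Nat.card κ := by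
    classical
    have := Fintype.ofFinite κ
    rw [Nat.card_eq_fintype_card, Nat.card_eq_fintype_card, Fintype.card_subtype_compl]
    have : 0 < Fintype.card κ := Fintype.card_pos_iff.2 ⟨r⟩
    simp; omega
  omega

/-- walking up to the top -/
theorem RTD.exists_top (h : RTD G r p d β) {v : V} {y : κ} (hv : v ∈ β y) :
    ∃ x, Anc r p x y ∧ v ∈ β x ∧ (x = r ∨ v ∉ β (p x)) ∧
      ∃ q : (ptree r p).Walk y x, ∀ s ∈ q.support, v ∈ β s := by
  induction hn : d y using Nat.strong_induction_on generalizing y with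
  | _ n ih =>
    by_cases hy : y = r ∨ v ∉ β (p y)
    · exact ⟨y, .refl, hv, hy, .nil, by simpa using hv⟩
    · push Not at hy
      obtain ⟨x, h1, h2, h3, q, hq⟩ := ih _ (hn ▸ h.lt y hy.1) hy.2 rfl
      refine ⟨x, .step y hy.1 h1, h2, h3, .cons (ptree_adj_parent h.lt hy.1) q, ?_⟩
      simpa [hv] using hq

theorem RTD.top_le (h : RTD G r p d β) {v : V} {x y : κ} (hx : v ∈ β x)
    (hx' : x = r ∨ v ∉ β (p x)) (hv : v ∈ β y) : Anc r p x y := by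
  obtain ⟨z, h1, h2, h3, _⟩ := h.exists_top hv
  rwa [h.top v x z hx hx' h2 h3]

theorem RTD.isTreeDecomp [Finite κ] (h : RTD G r p d β) : IsTreeDecomp G (ptree r p) β where
  isTree := ptree_isTree h.lt
  exists_bag := h.bag
  adj_bag := h.adj
  bag_connected := by
    intro v a b ha hb
    obtain ⟨x, _, h2, h3, q, hq⟩ := h.exists_top ha
    obtain ⟨y, _, h2', h3', q', hq'⟩ := h.exists_top hb
    obtain rfl := h.top v x y h2 h3 h2' h3'
    refine ⟨q.append q'.reverse, ?_⟩
    intro s hs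
    rw [SimpleGraph.Walk.mem_support_append_iff] at hs
    rcases hs with hs | hs
    · exact hq s hs
    · exact hq' s (by simpa using hs)

theorem exists_rtd {T : SimpleGraph κ} (h : IsTreeDecomp G T β) (s : κ) :
    ∃ p d, RTD G s p d β ∧ ∀ x, x ≠ s → T.Adj x (p x) := by
  have hp : ∀ x, ∃ y, x ≠ s → T.Adj x y ∧ T.dist y s < T.dist x s := by
    intro x
    by_cases hx : x = s
    · exact ⟨x, fun h => absurd hx h⟩
    obtain ⟨w, hw⟩ := h.isTree.1.exists_walk_length_eq_dist x s
    cases w with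
    | nil => exact absurd rfl hx
    | @cons _ y _ hxy q =>
      refine ⟨y, fun _ => ⟨hxy, ?_⟩⟩
      have := SimpleGraph.dist_le q
      simp at hw
      omega
  choose p hp using hp
  have hlt : ∀ x, x ≠ s → T.dist (p x) s < T.dist x s := fun x hx => (hp x hx).2
  have hle : ptree s p ≤ T := by
    intro x y hxy
    rw [ptree, SimpleGraph.fromRel_adj] at hxy
    rcases hxy with ⟨_, ⟨h, rfl⟩ | ⟨h, rfl⟩⟩
    · exact (hp x h).1
    · exact (hp y h).1.symm
  have hTle : T ≤ ptree s p :=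
    (SimpleGraph.isTree_iff_minimal_connected.1 h.isTree).2 (ptree_conn (d := fun x => T.dist x s) hlt) hle
  refine ⟨p, fun x => T.dist x s, ⟨hlt, h.exists_bag, h.adj_bag, ?_⟩, fun x hx => (hp x hx).1⟩
  have key : ∀ v x y, v ∈ β x → (x = s ∨ v ∉ β (p x)) → v ∈ β y → Anc s p x y := by
    intro v x y hx hx' hy
    obtain ⟨q, hq⟩ := h.bag_connected v x y hx hy
    have : ∀ (a b : κ) (q : T.Walk a b), (∀ z ∈ q.support, v ∈ β z) → Anc s p x a →
        Anc s p x b := by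
      intro a b q
      induction q with
      | nil => intro _ h; exact h
      | @cons a c b hac q ih =>
        intro hq ha
        have hc : v ∈ β c := hq c (by simp)
        refine ih (fun z hz => hq z (by simp [hz])) ?_
        have := hTle hac
        rw [ptree, SimpleGraph.fromRel_adj] at this
        rcases this with ⟨_, ⟨h1, rfl⟩ | ⟨h1, rfl⟩⟩
        · cases ha with
          | refl => rcases hx' with h | h
                    · exact absurd h h1
                    · exact absurd hc h
          | step _ _ h => exact h
        · exact .step c h1 ha
    exact this x y q hq .refl
  intro v x y hx hx' hy hy'
  have h1 := anc_le (d := fun x => T.dist x s) hlt (key v x y hx hx' hy)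
  have h2 := anc_le (d := fun x => T.dist x s) hlt (key v y x hy hy' hx)
  exact h1.2 (le_antisymm h1.1 h2.1)

end

theorem contract {V κ : Type} {G : SimpleGraph V} {r : κ} {p : κ → κ} {d : κ → ℕ}
    {β : κ → Set V} [Finite V] {k : ℕ} (h : RTD G r p d β)
    (hk : ∀ x, x ≠ r → (β x ∩ β (p x)).ncard ≤ k) (t : κ) (ht : t ≠ r)
    (hsub : β t ⊆ β (p t) ∨ β (p t) ⊆ β t) :
    ∃ (r' : {x : κ // x ≠ t}) (p' : {x : κ // x ≠ t} → {x : κ // x ≠ t})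
      (d' : {x : κ // x ≠ t} → ℕ) (β' : {x : κ // x ≠ t} → Set V),
      RTD G r' p' d' β' ∧ (∀ x, x ≠ r' → (β' x ∩ β' (p' x)).ncard ≤ k) ∧
      (∀ j, ∃ i, β' j = β i) ∧ (∀ i, ∃ j, β i ⊆ β' j) := by
  classical
  have hltt := h.lt t ht
  have hut : p t ≠ t := fun e => by rw [e] at hltt; omega
  set u := p t with hu
  let p' : {x : κ // x ≠ t} → {x : κ // x ≠ t} := fun x =>
    if hx : p x.1 = t then ⟨u, hut⟩ else ⟨p x.1, hx⟩
  let β' : {x : κ // x ≠ t} → Set V := fun x => if x.1 = u then β t ∪ β u else β x.1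
  have hβ : ∀ x, β x.1 ⊆ β' x := by
    intro x v hv
    by_cases hx : x.1 = u
    · simp only [β', hx, if_true]; right; rw [← hx]; exact hv
    · simpa only [β', hx, if_false] using hv
  have hβu : ∀ x, x.1 = u → β' x = β t ∪ β u := fun x hx => by simp only [β', hx, if_true]
  have hβn : ∀ x, x.1 ≠ u → β' x = β x.1 := fun x hx => by simp only [β', hx, if_false]
  have hpp : ∀ x, β (p x.1) ⊆ β' (p' x) := by
    intro x
    by_cases hx : p x.1 = t
    · have : p' x = ⟨u, hut⟩ := by simp only [p', hx, dif_pos]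
      rw [this, hβu _ rfl, hx]; exact Set.subset_union_left
    · have : p' x = ⟨p x.1, hx⟩ := by simp only [p', hx, dif_neg, not_false_iff]
      rw [this]; exact hβ ⟨p x.1, hx⟩
  -- tops
  have htop : ∀ v x, v ∈ β' x → (x = ⟨r, ht.symm⟩ ∨ v ∉ β' (p' x)) →
      ∃ y, v ∈ β y ∧ (y = r ∨ v ∉ β (p y)) ∧ (y = x.1 ∨ (x.1 = u ∧ y = t)) := by
    intro v x hv hx
    have hx2 : x.1 = r ∨ v ∉ β (p x.1) := by
      rcases hx with rfl | hx
      · left; rfl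
      · right; exact fun hh => hx (hpp x hh)
    by_cases hvx : v ∈ β x.1
    · exact ⟨x.1, hvx, hx2, Or.inl rfl⟩
    · have hxu : x.1 = u := by
        by_contra hc
        rw [hβn x hc] at hv; exact hvx hv
      rw [hβu x hxu] at hv
      rw [hxu] at hvx
      refine ⟨t, ?_, Or.inr hvx, Or.inr ⟨hxu, rfl⟩⟩
      rcases hv with hv | hv
      · exact hv
      · exact absurd hv hvx
  refine ⟨⟨r, ht.symm⟩, p', fun x => d x.1, β', ⟨?_, ?_, ?_, ?_⟩, ?_, ?_, ?_⟩
  · intro x hx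
    have hx' : x.1 ≠ r := fun e => hx (Subtype.ext e)
    have h1 := h.lt x.1 hx'
    by_cases hxt : p x.1 = t
    · have : p' x = ⟨u, hut⟩ := by simp only [p', hxt, dif_pos]
      rw [this]; rw [hxt] at h1; exact hltt.trans h1
    · have : p' x = ⟨p x.1, hxt⟩ := by simp only [p', hxt, dif_neg, not_false_iff]
      rw [this]; exact h1
  · intro v
    obtain ⟨x, hx⟩ := h.bag v
    by_cases hxt : x = t
    · exact ⟨⟨u, hut⟩, by rw [hβu _ rfl]; left; rw [← hxt]; exact hx⟩
    · exact ⟨⟨x, hxt⟩, hβ ⟨x, hxt⟩ hx⟩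
  · intro a b hab
    obtain ⟨x, hx, hx'⟩ := h.adj a b hab
    by_cases hxt : x = t
    · subst hxt
      exact ⟨⟨u, hut⟩, by rw [hβu _ rfl]; left; exact hx, by rw [hβu _ rfl]; left; exact hx'⟩
    · exact ⟨⟨x, hxt⟩, hβ ⟨x, hxt⟩ hx, hβ ⟨x, hxt⟩ hx'⟩
  · intro v x y hx hx' hy hy'
    obtain ⟨a, ha1, ha2, ha3⟩ := htop v x hx hx'
    obtain ⟨b, hb1, hb2, hb3⟩ := htop v y hy hy'
    have hab := h.top v a b ha1 ha2 hb1 hb2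
    apply Subtype.ext
    have := x.2
    have := y.2
    grind
  · intro x hx
    have hx' : x.1 ≠ r := fun e => hx (Subtype.ext e)
    refine le_trans (Set.ncard_le_ncard ?_) (hk x.1 hx')
    rintro v ⟨hv1, hv2⟩
    have hlx := h.lt x.1 hx'
    by_cases hxu : x.1 = u
    · -- x = u
      have hpx : p x.1 ≠ t := by intro e; rw [e, hxu] at hlx; omega
      have hpu : p x.1 ≠ u := by intro e; rw [e, hxu] at hlx; omega
      have e1 : p' x = ⟨p x.1, hpx⟩ := by simp only [p', hpx, dif_neg, not_false_iff]
      rw [e1, hβn _ hpu] at hv2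
      refine ⟨?_, hv2⟩
      by_contra hc
      rw [hβu x hxu] at hv1
      rw [hxu] at hc
      have hvt : v ∈ β t := by
        rcases hv1 with hv | hv
        · exact hv
        · exact absurd hv hc
      have h1 : d t ≤ d (p x.1) := (anc_le h.lt (h.top_le hvt (Or.inr hc) hv2)).1
      have h2 : d x.1 = d u := by rw [hxu]
      omega
    · rw [hβn x hxu] at hv1
      refine ⟨hv1, ?_⟩
      by_contra hc
      by_cases hxt : p x.1 = t
      · have e1 : p' x = ⟨u, hut⟩ := by simp only [p', hxt, dif_pos]
        rw [e1, hβu _ rfl] at hv2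
        have hvu : v ∈ β u := by
          rcases hv2 with hv | hv
          · rw [hxt] at hc; exact absurd hv hc
          · exact hv
        have := (anc_le h.lt (h.top_le hv1 (Or.inr hc) hvu)).1
        rw [hxt] at hlx
        omega
      · have e1 : p' x = ⟨p x.1, hxt⟩ := by simp only [p', hxt, dif_neg, not_false_iff]
        rw [e1] at hv2
        by_cases hpu : p x.1 = u
        · rw [hβu _ hpu] at hv2
          rw [hpu] at hc
          have hvt : v ∈ β t := by
            rcases hv2 with hv | hv
            · exact hv
            · exact absurd hv hc
          exact x.2 (h.top v x.1 t hv1 (Or.inr (by rwa [hpu])) hvt (Or.inr hc))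
        · rw [hβn _ hpu] at hv2
          exact hc hv2
  · intro j
    by_cases hj : j.1 = u
    · rcases hsub with hs | hs
      · exact ⟨u, by rw [hβu j hj, Set.union_eq_right.2 hs]⟩
      · exact ⟨t, by rw [hβu j hj, Set.union_eq_left.2 hs]⟩
    · exact ⟨j.1, hβn j hj⟩
  · intro i
    by_cases hi : i = t
    · exact ⟨⟨u, hut⟩, by rw [hβu _ rfl, hi]; exact Set.subset_union_left⟩
    · exact ⟨⟨i, hi⟩, hβ ⟨i, hi⟩⟩

theorem incomparable {V κ : Type} {G : SimpleGraph V} {r : κ} {p : κ → κ} {d : κ → ℕ}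
    {β : κ → Set V} (h : RTD G r p d β)
    (hno : ∀ t, t ≠ r → ¬ (β t ⊆ β (p t) ∨ β (p t) ⊆ β t)) (x y : κ) (hxy : β x ⊆ β y) :
    x = y := by
  by_contra hne
  by_cases hanc : Anc r p x y
  · have : ∀ z, Anc r p x z → x ≠ z → β x ⊆ β z → False := by
      intro z hz
      induction hz with
      | refl => intro hh; exact absurd rfl hh
      | step z hz hxz ih =>
        intro hne hs
        by_cases hxp : x = p z
        · subst hxp; exact hno z hz (Or.inr hs)
        · refine ih hxp ?_
          intro v hv
          by_contra hc
          have h1 := (anc_le h.lt (h.top_le (hs hv) (Or.inr hc) hv)).1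
          have h2 := (anc_le h.lt hxz).1
          have h3 := h.lt z hz
          omega
    exact this y hanc hne hxy
  · have hx : ∀ v ∈ β x, ¬ (x = r ∨ v ∉ β (p x)) := by
      intro v hv hc
      exact hanc (h.top_le hv hc (hxy hv))
    by_cases hxr : x = r
    · exact hanc (hxr ▸ anc_root h.lt y)
    · refine hno x hxr (Or.inl fun v hv => ?_)
      have := hx v hv
      push Not at this
      exact this.2

theorem reduce {V : Type} [Finite V] {G : SimpleGraph V} {k : ℕ} (n : ℕ) :
    ∀ {κ : Type} [Finite κ] {r : κ} {p : κ → κ} {d : κ → ℕ} {β : κ → Set V}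
    (_ : Nat.card κ = n) (_ : RTD G r p d β)
    (_ : ∀ x, x ≠ r → (β x ∩ β (p x)).ncard ≤ k),
    ∃ (κ' : Type) (_ : Finite κ') (r' : κ') (p' : κ' → κ')
      (d' : κ' → ℕ) (β' : κ' → Set V),
      RTD G r' p' d' β' ∧ (∀ x, x ≠ r' → (β' x ∩ β' (p' x)).ncard ≤ k) ∧
      (∀ j, ∃ i, β' j = β i) ∧ (∀ i, ∃ j, β i ⊆ β' j) ∧
      (∀ x y, β' x ⊆ β' y → x = y) := by
  induction n using Nat.strong_induction_on with
  | _ n ih =>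
    intro κ _ r p d β hn h hk
    by_cases hex : ∃ t, t ≠ r ∧ (β t ⊆ β (p t) ∨ β (p t) ⊆ β t)
    · obtain ⟨t, ht, hs⟩ := hex
      obtain ⟨r1, p1, d1, β1, h1, hk1, ha, hb⟩ := contract h hk t ht hs
      have hc : Nat.card {x : κ // x ≠ t} < n := by
        rw [← hn]
        exact Finite.card_subtype_lt (x := t) (by simp)
      obtain ⟨κ2, f2, r2, p2, d2, β2, h2, hk2, ha2, hb2, hac⟩ := ih _ hc rfl h1 hk1
      refine ⟨κ2, f2, r2, p2, d2, β2, h2, hk2, ?_, ?_, hac⟩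
      · intro j
        obtain ⟨i, hi⟩ := ha2 j
        obtain ⟨l, hl⟩ := ha i
        exact ⟨l, hi.trans hl⟩
      · intro i
        obtain ⟨j, hj⟩ := hb i
        obtain ⟨l, hl⟩ := hb2 j
        exact ⟨l, hj.trans hl⟩
    · push Not at hex
      refine ⟨κ, inferInstance, r, p, d, β, h, hk, fun j => ⟨j, rfl⟩, fun i => ⟨i, subset_rfl⟩, ?_⟩
      refine incomparable h ?_
      intro t ht hc
      have := hex t ht
      tauto

theorem count {V κ : Type} [Finite V] [Finite κ] {G : SimpleGraph V} {r : κ} {p : κ → κ}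
    {d : κ → ℕ} {β : κ → Set V} (h : RTD G r p d β) (hac : ∀ x y, β x ⊆ β y → x = y) :
    Nat.card κ ≤ Nat.card V + 1 := by
  classical
  have hv : ∀ x : {x : κ // x ≠ r}, ∃ v, v ∈ β x.1 ∧ v ∉ β (p x.1) := by
    intro x
    by_contra hc
    push Not at hc
    have h1 := hac x.1 (p x.1) hc
    have h2 := h.lt x.1 x.2
    rw [← h1] at h2; omega
  choose f hf using hv
  have h1 : Nat.card {x : κ // x ≠ r} ≤ Nat.card V := by
    refine Nat.card_le_card_of_injective f ?_
    intro x y hxy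
    apply Subtype.ext
    exact h.top (f x) x.1 y.1 (hf x).1 (Or.inr (hf x).2) (hxy ▸ (hf y).1) (Or.inr (hxy ▸ (hf y).2))
  have h2 : Nat.card {x : κ // x ≠ r} + 1 = Nat.card κ := by
    have := Fintype.ofFinite κ
    rw [Nat.card_eq_fintype_card, Nat.card_eq_fintype_card, Fintype.card_subtype_compl]
    have : 0 < Fintype.card κ := Fintype.card_pos_iff.2 ⟨r⟩
    simp; omega
  omega

theorem sep_walk {V κ : Type} {G : SimpleGraph V} {r : κ} {p : κ → κ} {d : κ → ℕ}
    {β : κ → Set V} (h : RTD G r p d β) {t : κ} (ht : t ≠ r) {a b : V} (q : G.Walk a b)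
    (ha : ∃ y, a ∈ β y ∧ Anc r p t y) (hb : b ∈ β r) :
    ∃ v ∈ q.support, v ∈ β t ∧ v ∈ β (p t) := by
  have hcap : ∀ v y z, v ∈ β y → Anc r p t y → v ∈ β z → ¬ Anc r p t z →
      v ∈ β t ∧ v ∈ β (p t) := by
    intro v y z hy hty hz hnz
    induction hty with
    | refl =>
      refine ⟨hy, ?_⟩
      by_contra hc
      exact hnz (h.top_le hy (Or.inr hc) hz)
    | step y hyr hty ih =>
      by_cases hc : v ∈ β (p y)
      · exact ih hc
      · exact absurd (anc_trans (.step y hyr hty) (h.top_le hy (Or.inr hc) hz)) hnz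
  have hr : ¬ Anc r p t r := by
    intro hh
    cases hh with
    | refl => exact ht rfl
    | step _ h1 _ => exact h1 rfl
  induction q with
  | nil =>
    obtain ⟨y, hy, hty⟩ := ha
    exact ⟨_, by simp, hcap _ y r hy hty hb hr⟩
  | @cons a c b hac q ih =>
    by_cases hc : ∃ y, c ∈ β y ∧ Anc r p t y
    · obtain ⟨v, hv, hv'⟩ := ih hc hb
      exact ⟨v, by simp [hv], hv'⟩
    · obtain ⟨z, hz1, hz2⟩ := h.adj a c hac
      obtain ⟨y, hy, hty⟩ := ha
      exact ⟨a, by simp, hcap a y z hy hty hz1 (fun hh => hc ⟨z, hz2, hh⟩)⟩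

theorem avoid {V : Type} {G : SimpleGraph V} {A B : Set V}
    (hsep : ∀ u v, G.Adj u v → (u ∈ A ∧ v ∈ A) ∨ (u ∈ B ∧ v ∈ B)) {a b : V} (q : G.Walk a b)
    (hb : b ∈ B) (hq : ∀ v ∈ q.support, v ∉ A ∩ B) : ∀ v ∈ q.support, v ∉ A := by
  induction q with
  | nil =>
    intro v hv hA
    obtain rfl : v = _ := by simpa using hv
    exact hq _ hv ⟨hA, hb⟩
  | @cons a c b hac q ih =>
    have ih' := ih hb (fun v hv => hq v (by simp [hv]))
    intro v hv hA
    rw [SimpleGraph.Walk.support_cons, List.mem_cons] at hv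
    rcases hv with rfl | hv
    · rcases hsep _ _ hac with hh | hh
      · exact ih' c (by simp) hh.2
      · exact hq v (by simp) ⟨hA, hh.1⟩
    · exact ih' v hv hA

theorem seg {V : Type} {G : SimpleGraph V} {A B : Set V}
    (hsep : ∀ u v, G.Adj u v → (u ∈ A ∧ v ∈ A) ∨ (u ∈ B ∧ v ∈ B)) {a b x : V} (q : G.Walk a b)
    (hq : q.IsPath) (hx : x ∈ q.support) (hb : b ∈ B)
    (hX : ∀ v ∈ q.support, v ∈ A ∩ B → v = x) :
    ∃ q' : G.Walk x b, ∀ v ∈ q'.support, v ∈ q.support ∧ (v = x ∨ v ∉ A) := by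
  classical
  refine ⟨q.dropUntil x hx, ?_⟩
  have hsub := q.support_dropUntil_subset_support hx
  have hp := hq.dropUntil hx
  generalize q.dropUntil x hx = w at hsub hp
  intro v hv
  refine ⟨hsub hv, ?_⟩
  cases w with
  | nil => left; simpa using hv
  | @cons _ c _ hxc w =>
    rw [SimpleGraph.Walk.cons_isPath_iff] at hp
    rw [SimpleGraph.Walk.support_cons, List.mem_cons] at hv
    rcases hv with hv | hv
    · exact Or.inl hv
    · right
      refine avoid hsep w hb ?_ v hv
      intro z hz hzX
      exact hp.2 (hX z (hsub (by simp [hz])) hzX ▸ hz)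

def UU {V ι : Type} (s : ι) (p : ι → ι) (β : ι → Set V) (t : ι) : Set V :=
  {v | ∃ y, v ∈ β y ∧ Anc s p t y}

def BB {V ι : Type} (s : ι) (p : ι → ι) (β : ι → Set V) (A : Bool → Set V) (X : Set V)
    (x : ι × Bool) : Set V := (β x.1 ∩ A x.2) ∪ (X ∩ UU s p β x.1)

open Classical in
noncomputable def pp {ι : Type} (s : ι) (p : ι → ι) (x : ι × Bool) : ι × Bool :=
  if x.1 = s then (s, true) else (p x.1, x.2)

def dd {ι : Type} (d : ι → ℕ) (x : ι × Bool) : ℕ := d x.1 + if x.2 then 0 else 1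

section
variable {V ι : Type} {G : SimpleGraph V} {s : ι} {p : ι → ι} {d : ι → ℕ} {β : ι → Set V}
  {A : Bool → Set V} {X : Set V}

theorem BB_eq (hX : ∀ b v, v ∈ X ↔ v ∈ A b ∧ v ∈ A (!b)) (hA : ∀ b v, v ∈ A b ∨ v ∈ A (!b))
    (t : ι) (b : Bool) : BB s p β A X (t, b) = (β t \ A (!b)) ∪ (X ∩ UU s p β t) := by
  ext v
  have h1 := hX b v
  have h2 := hA b v
  simp only [BB, Set.mem_union, Set.mem_inter_iff, Set.mem_sdiff]
  have h3 : v ∈ β t → v ∈ UU s p β t := fun h => ⟨t, h, .refl⟩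
  tauto

theorem UU_parent {t : ι} (ht : t ≠ s) : UU s p β t ⊆ UU s p β (p t) := by
  rintro v ⟨y, hy, h⟩
  exact ⟨y, hy, anc_parent ht h⟩

theorem surgery_rtd (h : RTD G s p d β)
    (hX : ∀ b v, v ∈ X ↔ v ∈ A b ∧ v ∈ A (!b)) (hA : ∀ b v, v ∈ A b ∨ v ∈ A (!b))
    (hsep : ∀ u v, G.Adj u v → ∃ b, u ∈ A b ∧ v ∈ A b) :
    RTD G (s, true) (pp s p) (dd d) (BB s p β A X) := by
  have hUs : ∀ v, v ∈ UU s p β s := by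
    intro v
    obtain ⟨y, hy⟩ := h.bag v
    exact ⟨y, hy, anc_root h.lt y⟩
  refine ⟨?_, ?_, ?_, ?_⟩
  · rintro ⟨t, b⟩ hx
    by_cases ht : t = s
    · subst ht
      cases b
      · simp [pp, dd]
      · exact absurd rfl hx
    · have := h.lt t ht
      simp [pp, dd, ht, this]
  · intro v
    obtain ⟨y, hy⟩ := h.bag v
    rcases hA true v with hh | hh
    · exact ⟨(y, true), Or.inl ⟨hy, hh⟩⟩
    · exact ⟨(y, false), Or.inl ⟨hy, hh⟩⟩
  · intro u v huv
    obtain ⟨y, hy, hy'⟩ := h.adj u v huv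
    obtain ⟨b, hb, hb'⟩ := hsep u v huv
    exact ⟨(y, b), Or.inl ⟨hy, hb⟩, Or.inl ⟨hy', hb'⟩⟩
  · intro v
    by_cases hv : v ∈ X
    · have key : ∀ x : ι × Bool, v ∈ BB s p β A X x →
          (x = (s, true) ∨ v ∉ BB s p β A X (pp s p x)) → x = (s, true) := by
        rintro ⟨t, b⟩ h1 h2
        rcases h2 with h2 | h2
        · exact h2
        exfalso
        apply h2
        by_cases ht : t = s
        · simp only [pp, ht, if_true]
          exact Or.inr ⟨hv, hUs v⟩
        · simp only [pp, ht, if_false]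
          refine Or.inr ⟨hv, UU_parent ht ?_⟩
          rcases h1 with h1 | h1
          · exact ⟨t, h1.1, .refl⟩
          · exact h1.2
      intro x y h1 h2 h3 h4
      rw [key x h1 h2, key y h3 h4]
    · have key : ∀ x : ι × Bool, v ∈ BB s p β A X x →
          (x = (s, true) ∨ v ∉ BB s p β A X (pp s p x)) →
          v ∈ A x.2 ∧ v ∈ β x.1 ∧ (x.1 = s ∨ v ∉ β (p x.1)) := by
        rintro ⟨t, b⟩ h1 h2
        have h1' : v ∈ β t ∧ v ∈ A b := by
          rcases h1 with h1 | h1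
          · exact h1
          · exact absurd h1.1 hv
        refine ⟨h1'.2, h1'.1, ?_⟩
        by_cases ht : t = s
        · exact Or.inl ht
        · right
          intro hc
          rcases h2 with h2 | h2
          · exact ht (congrArg Prod.fst h2)
          · simp only [pp, ht, if_false] at h2
            exact h2 (Or.inl ⟨hc, h1'.2⟩)
      rintro ⟨t, b⟩ ⟨t', b'⟩ h1 h2 h3 h4
      obtain ⟨a1, a2, a3⟩ := key _ h1 h2
      obtain ⟨c1, c2, c3⟩ := key _ h3 h4
      have e1 : t = t' := h.top v t t' a2 a3 c2 c3
      have e2 : b = b' := by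
        by_contra hne
        have : b' = !b := by cases b <;> cases b' <;> simp_all
        subst this
        exact hv ((hX b v).2 ⟨a1, c1⟩)
      rw [e1, e2]

theorem surgery_adh [Finite V] {k : ℕ}
    (hk : ∀ t, t ≠ s → (β t ∩ β (p t)).ncard ≤ k)
    (hX : ∀ b v, v ∈ X ↔ v ∈ A b ∧ v ∈ A (!b)) (hA : ∀ b v, v ∈ A b ∨ v ∈ A (!b))
    (h1 : ∀ b t, t ≠ s → (X ∩ UU s p β t).ncard ≤ (β t ∩ β (p t) ∩ A b).ncard)
    (h3 : X.ncard ≤ k) (x : ι × Bool) (hx : x ≠ (s, true)) :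
    (BB s p β A X x ∩ BB s p β A X (pp s p x)).ncard ≤ k := by
  obtain ⟨t, b⟩ := x
  by_cases ht : t = s
  · subst ht
    cases b
    · refine le_trans (Set.ncard_le_ncard ?_) h3
      rintro v ⟨hv1, hv2⟩
      simp only [pp, if_true] at hv2
      rcases hv1 with hv1 | hv1
      · rcases hv2 with hv2 | hv2
        · exact (hX true v).2 ⟨hv2.2, hv1.2⟩
        · exact hv2.1
      · exact hv1.1
    · exact absurd rfl hx
  · have e : pp s p (t, b) = (p t, b) := by simp [pp, ht]
    rw [e, BB_eq hX hA, BB_eq hX hA]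
    have hsub : (β t \ A (!b) ∪ X ∩ UU s p β t) ∩ (β (p t) \ A (!b) ∪ X ∩ UU s p β (p t)) ⊆
        ((β t ∩ β (p t)) \ A (!b)) ∪ (X ∩ UU s p β t) := by
      rintro v ⟨hv1, hv2⟩
      have h1 := hX b v
      simp only [Set.mem_union, Set.mem_inter_iff, Set.mem_sdiff] at *
      tauto
    have := Set.ncard_le_ncard hsub
    have h5 := Set.ncard_union_le ((β t ∩ β (p t)) \ A (!b)) (X ∩ UU s p β t)
    have h6 := h1 (!b) t ht
    have h7 := Set.ncard_inter_add_ncard_sdiff_eq_ncard (β t ∩ β (p t)) (A (!b))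
    have h8 := hk t ht
    omega

theorem surgery_red [Finite V] (hlt : ∀ x, x ≠ s → d (p x) < d x)
    (h1 : ∀ b t, t ≠ s → (X ∩ UU s p β t).ncard ≤ (β t ∩ β (p t) ∩ A b).ncard)
    (h2 : ∀ b, (X ∩ UU s p β s).ncard < (β s ∩ A b).ncard) (b : Bool) (t : ι) :
    ∃ t', (X ∩ UU s p β t').ncard < (β t' ∩ A b).ncard ∧
      BB s p β A X (t, b) ⊆ BB s p β A X (t', b) := by
  have h := anc_root hlt t
  induction h with
  | refl => exact ⟨s, h2 b, subset_rfl⟩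
  | step t ht _ ih =>
    by_cases hc : (X ∩ UU s p β t).ncard < (β t ∩ A b).ncard
    · exact ⟨t, hc, subset_rfl⟩
    · obtain ⟨t', h3, h4⟩ := ih
      refine ⟨t', h3, subset_trans ?_ h4⟩
      have h5 := h1 b t ht
      have hs : β t ∩ β (p t) ∩ A b ⊆ β t ∩ A b := fun v hv => ⟨hv.1.1, hv.2⟩
      have heq := Set.eq_of_subset_of_ncard_le hs (by omega)
      rintro v (hv | hv)
      · have hv' : v ∈ β t ∩ A b := hv
        rw [← heq] at hv'
        exact Or.inl ⟨hv'.1.2, hv'.2⟩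
      · exact Or.inr ⟨hv.1, UU_parent ht hv.2⟩

theorem surgery_card [Finite V] 
    (hX : ∀ b v, v ∈ X ↔ v ∈ A b ∧ v ∈ A (!b)) (hA : ∀ b v, v ∈ A b ∨ v ∈ A (!b)) (t : ι) :
    ∃ a b c : ℕ, (β t ∩ A true).ncard = a + c ∧ (β t ∩ A false).ncard = b + c ∧
      (β t).ncard = a + b + c ∧ c ≤ (X ∩ UU s p β t).ncard ∧
      (BB s p β A X (t, true)).ncard = a + (X ∩ UU s p β t).ncard ∧
      (BB s p β A X (t, false)).ncard = b + (X ∩ UU s p β t).ncard := by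
  refine ⟨(β t \ A false).ncard, (β t \ A true).ncard, (β t ∩ X).ncard, ?_, ?_, ?_, ?_, ?_, ?_⟩
  · rw [← Set.ncard_union_eq]
    · congr 1; ext v; have h1 := hX true v; have h2 := hA true v
      simp only [Set.mem_union, Set.mem_inter_iff, Set.mem_sdiff, Bool.not_true] at *; tauto
    · rw [Set.disjoint_left]; rintro v hv hv'; exact hv.2 ((hX true v).1 hv'.2).2
  · rw [← Set.ncard_union_eq]
    · congr 1; ext v; have h1 := hX true v; have h2 := hA true v
      simp only [Set.mem_union, Set.mem_inter_iff, Set.mem_sdiff, Bool.not_true] at *; tauto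
    · rw [Set.disjoint_left]; rintro v hv hv'; exact hv.2 ((hX true v).1 hv'.2).1
  · rw [← Set.ncard_union_eq, ← Set.ncard_union_eq]
    · congr 1; ext v; have h1 := hX true v; have h2 := hA true v
      simp only [Set.mem_union, Set.mem_inter_iff, Set.mem_sdiff, Bool.not_true] at *; tauto
    · rw [Set.disjoint_left]; rintro v (hv | hv) hv'
      · exact hv.2 ((hX true v).1 hv'.2).2
      · exact hv.2 ((hX true v).1 hv'.2).1
    · rw [Set.disjoint_left]; rintro v hv hv'
      rcases hA true v with h | h
      · exact hv'.2 h
      · exact hv.2 h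
  · exact Set.ncard_le_ncard fun v hv => ⟨hv.2, t, hv.1, .refl⟩
  · rw [BB_eq hX hA, Set.ncard_union_eq]
    · rfl
    · rw [Set.disjoint_left]; rintro v hv hv'; exact hv.2 ((hX true v).1 hv'.1).2
  · rw [BB_eq hX hA, Set.ncard_union_eq]
    · rfl
    · rw [Set.disjoint_left]; rintro v hv hv'; exact hv.2 ((hX true v).1 hv'.1).1

end

theorem arith (k a b c x : ℕ) (hc : c ≤ x) (hx : x ≤ k) (h1 : x ≤ a + c) (h2 : x ≤ b + c) :
    let w1 : ℕ → ℕ := fun m => m - (2 * k + 1)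
    let w2 : ℕ → ℕ := fun m => 2 ^ min m (2 * k + 1) - 1
    (if x < a + c then w1 (a + x) else 0) + (if x < b + c then w1 (b + x) else 0) ≤ w1 (a + b + c) ∧
    ((if x < a + c then w1 (a + x) else 0) + (if x < b + c then w1 (b + x) else 0) = w1 (a + b + c) →
      ((if x < a + c then w2 (a + x) else 0) + (if x < b + c then w2 (b + x) else 0) ≤ w2 (a + b + c) ∧
      (x < a + c → x < b + c →
      (if x < a + c then w2 (a + x) else 0) + (if x < b + c then w2 (b + x) else 0) < w2 (a + b + c)))) := by
  intro w1 w2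
  by_cases ha : x < a + c
  · by_cases hb : x < b + c
    · simp only [ha, hb, if_true, w1]
      refine ⟨by omega, fun he => ?_⟩
      have hm : a + b + c ≤ 2 * k + 1 := by omega
      have key : w2 (a + x) + w2 (b + x) < w2 (a + b + c) := by
        simp only [w2]
        obtain ⟨m, hm'⟩ : ∃ m, a + b + c = m + 1 := ⟨a + b + c - 1, by omega⟩
        rw [min_eq_left (by omega), min_eq_left (by omega), min_eq_left hm, hm', pow_succ]
        have p1 : 2 ^ (a + x) ≤ 2 ^ m := Nat.pow_le_pow_right (by norm_num) (by omega)
        have p2 : 2 ^ (b + x) ≤ 2 ^ m := Nat.pow_le_pow_right (by norm_num) (by omega)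
        have p3 : 0 < 2 ^ (a + x) := by positivity
        have p4 : 0 < 2 ^ (b + x) := by positivity
        omega
      exact ⟨key.le, fun _ _ => key⟩
    · have e : a + x = a + b + c := by omega
      simp [ha, hb, e]
  · have hax : x = a + c := by omega
    by_cases hb : x < b + c
    · have e : b + x = a + b + c := by omega
      simp [ha, hb, e]
    · simp [ha, hb]

theorem sum_bound {V κ ι : Type} [Fintype κ] [Fintype ι] [Finite V] (β' : κ → Set V) (B : ι → Set V)
    (N : ι → Prop) [DecidablePred N] (hac : ∀ x y, β' x ⊆ β' y → x = y)
    (h1 : ∀ j, ∃ i, β' j = B i) (h2 : ∀ i, ∃ j, B i ⊆ β' j) (hN : ∀ i, ∃ i', N i' ∧ B i ⊆ B i')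
    (w : ℕ → ℕ) (hw : Monotone w) :
    ∑ j, w (β' j).ncard ≤ ∑ i, if N i then w (B i).ncard else 0 := by
  classical
  have h3 : ∀ j, ∃ i, N i ∧ β' j ⊆ B i := by
    intro j
    obtain ⟨i, hi⟩ := h1 j
    obtain ⟨i', h, h'⟩ := hN i
    exact ⟨i', h, hi ▸ h'⟩
  choose f hf hf' using h3
  have hinj : Function.Injective f := by
    intro x y hxy
    obtain ⟨l, hl⟩ := h2 (f x)
    rw [hac x l ((hf' x).trans hl), hac y l ((hf' y).trans (hxy ▸ hl))]
  calc ∑ j, w (β' j).ncard ≤ ∑ j, w (B (f j)).ncard :=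
        Finset.sum_le_sum fun j _ => hw (Set.ncard_le_ncard (hf' j))
    _ = ∑ i ∈ Finset.univ.image f, w (B i).ncard := by
        rw [Finset.sum_image (fun x _ y _ h => hinj h)]
    _ = ∑ i ∈ Finset.univ.image f, if N i then w (B i).ncard else 0 := by
        refine Finset.sum_congr rfl fun i hi => ?_
        obtain ⟨j, _, rfl⟩ := Finset.mem_image.1 hi
        simp [hf j]
    _ ≤ _ := Finset.sum_le_sum_of_subset (Finset.subset_univ _)

theorem refine_core {V ι : Type} [Fintype V] [Fintype ι] {G : SimpleGraph V} {s : ι} {p : ι → ι}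
    {d : ι → ℕ} {β : ι → Set V} {A : Bool → Set V} {X : Set V} {k : ℕ} (h : RTD G s p d β)
    (hk : ∀ t, t ≠ s → (β t ∩ β (p t)).ncard ≤ k)
    (hX : ∀ b v, v ∈ X ↔ v ∈ A b ∧ v ∈ A (!b)) (hA : ∀ b v, v ∈ A b ∨ v ∈ A (!b))
    (hsep : ∀ u v, G.Adj u v → ∃ b, u ∈ A b ∧ v ∈ A b)
    (h1 : ∀ b t, t ≠ s → (X ∩ UU s p β t).ncard ≤ (β t ∩ β (p t) ∩ A b).ncard)
    (h2 : ∀ b, X.ncard < (β s ∩ A b).ncard)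
    (h3 : X.ncard ≤ k) :
    ∃ (κ : Type) (_ : Fintype κ) (T' : SimpleGraph κ) (β' : κ → Set V),
      IsTreeDecomp G T' β' ∧
      (∀ s' t' : κ, T'.Adj s' t' → (β' s' ∩ β' t').ncard ≤ k) ∧
      Nat.card κ ≤ Fintype.card V + 1 ∧
      phi (Fintype.card V) k β' < phi (Fintype.card V) k β := by
  classical
  have h2' : ∀ b, (X ∩ UU s p β s).ncard < (β s ∩ A b).ncard := fun b =>
    lt_of_le_of_lt (Set.ncard_le_ncard Set.inter_subset_left) (h2 b)
  obtain ⟨κ, hfin, r', p', d', β', hr, hk', ha, hb, hac⟩ :=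
    reduce _ rfl (surgery_rtd h hX hA hsep) (surgery_adh hk hX hA h1 h3)
  have hcount := count hr hac
  rw [Nat.card_eq_fintype_card (α := V)] at hcount
  have hft : Fintype κ := Fintype.ofFinite κ
  refine ⟨κ, hft, ptree r' p', β', hr.isTreeDecomp, ?_, hcount, ?_⟩
  · intro x y hxy
    rw [ptree, SimpleGraph.fromRel_adj] at hxy
    rcases hxy with ⟨_, ⟨hh, rfl⟩ | ⟨hh, rfl⟩⟩
    · exact hk' x hh
    · rw [Set.inter_comm]; exact hk' y hh
  let N : ι × Bool → Prop := fun x => (X ∩ UU s p β x.1).ncard < (β x.1 ∩ A x.2).ncard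
  have hN : ∀ i, ∃ i', N i' ∧ BB s p β A X i ⊆ BB s p β A X i' := by
    rintro ⟨t, b⟩
    obtain ⟨t', h4, h5⟩ := surgery_red h.lt h1 h2' b t
    exact ⟨(t', b), h4, h5⟩
  let w1 : ℕ → ℕ := fun m => m - (2 * k + 1)
  let w2 : ℕ → ℕ := fun m => 2 ^ min m (2 * k + 1) - 1
  have hw1 : Monotone w1 := fun a b hab => Nat.sub_le_sub_right hab _
  have hw2 : Monotone w2 := fun a b hab =>
    Nat.sub_le_sub_right (Nat.pow_le_pow_right (by norm_num) (min_le_min_right _ hab)) _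
  have s1 := sum_bound β' (BB s p β A X) N hac ha hb hN w1 hw1
  have s2 := sum_bound β' (BB s p β A X) N hac ha hb hN w2 hw2
  rw [Fintype.sum_prod_type] at s1 s2
  simp only [Fintype.sum_bool] at s1 s2
  have e1 : phi1 k β' = ∑ j, w1 (β' j).ncard := finsum_eq_sum_of_fintype _
  have e2 : phi2 k β' = ∑ j, w2 (β' j).ncard := finsum_eq_sum_of_fintype _
  have e3 : phi1 k β = ∑ j, w1 (β j).ncard := finsum_eq_sum_of_fintype _
  have e4 : phi2 k β = ∑ j, w2 (β j).ncard := finsum_eq_sum_of_fintype _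
  have har : ∀ t,
      (if N (t, true) then w1 (BB s p β A X (t, true)).ncard else 0) +
        (if N (t, false) then w1 (BB s p β A X (t, false)).ncard else 0) ≤ w1 (β t).ncard ∧
      ((if N (t, true) then w1 (BB s p β A X (t, true)).ncard else 0) +
        (if N (t, false) then w1 (BB s p β A X (t, false)).ncard else 0) = w1 (β t).ncard →
      ((if N (t, true) then w2 (BB s p β A X (t, true)).ncard else 0) +
        (if N (t, false) then w2 (BB s p β A X (t, false)).ncard else 0) ≤ w2 (β t).ncard ∧
      (N (t, true) → N (t, false) →
      (if N (t, true) then w2 (BB s p β A X (t, true)).ncard else 0) +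
        (if N (t, false) then w2 (BB s p β A X (t, false)).ncard else 0) < w2 (β t).ncard))) := by
    intro t
    have hle : ∀ b, (X ∩ UU s p β t).ncard ≤ (β t ∩ A b).ncard := by
      intro b
      by_cases ht : t = s
      · subst ht; exact (h2' b).le
      · exact (h1 b t ht).trans (Set.ncard_le_ncard fun v hv => ⟨hv.1.1, hv.2⟩)
    obtain ⟨a, b, c, c1, c2, c3, c4, c5, c6⟩ := surgery_card (s := s) (p := p) (β := β) hX hA t
    have l1 := hle true
    have l2 := hle false
    have l3 : (X ∩ UU s p β t).ncard ≤ k := (Set.ncard_le_ncard Set.inter_subset_left).trans h3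
    simp only [N]
    rw [c1] at l1 ⊢
    rw [c2] at l2 ⊢
    rw [c3, c5, c6]
    exact arith k a b c _ c4 l3 l1 l2
  have hle1 := s1.trans (Finset.sum_le_sum fun t _ => (har t).1)
  rw [← e1, ← e3] at hle1
  unfold phi
  rcases hle1.lt_or_eq with hlt | heq
  · have hb2 : phi2 k β' < 2 ^ (2 * k + 1) * (Fintype.card V + 1) := by
      have hw : ∀ j, w2 (β' j).ncard ≤ 2 ^ (2 * k + 1) - 1 := fun j =>
        Nat.sub_le_sub_right (Nat.pow_le_pow_right (by norm_num) (min_le_right _ _)) _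
      have q1 : phi2 k β' ≤ Fintype.card κ * (2 ^ (2 * k + 1) - 1) := by
        rw [e2]
        refine (Finset.sum_le_sum fun j _ => hw j).trans ?_
        simp
      rw [Nat.card_eq_fintype_card] at hcount
      have q2 : Fintype.card κ * (2 ^ (2 * k + 1) - 1) ≤
          (Fintype.card V + 1) * (2 ^ (2 * k + 1) - 1) := Nat.mul_le_mul_right _ hcount
      have q3 : (Fintype.card V + 1) * (2 ^ (2 * k + 1) - 1) <
          (Fintype.card V + 1) * 2 ^ (2 * k + 1) := by
        apply Nat.mul_lt_mul_of_pos_left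
        · have : 0 < 2 ^ (2 * k + 1) := by positivity
          omega
        · omega
      rw [mul_comm]
      omega
    have q4 : 2 ^ (2 * k + 1) * (Fintype.card V + 1) * (phi1 k β' + 1) ≤
        2 ^ (2 * k + 1) * (Fintype.card V + 1) * phi1 k β := Nat.mul_le_mul_left _ hlt
    rw [mul_add, mul_one] at q4
    omega
  · have hsum : ∑ t, ((if N (t, true) then w1 (BB s p β A X (t, true)).ncard else 0) +
        (if N (t, false) then w1 (BB s p β A X (t, false)).ncard else 0)) =
        ∑ t, w1 (β t).ncard := by
      refine le_antisymm (Finset.sum_le_sum fun t _ => (har t).1) ?_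
      rw [← e3, ← heq, e1]; exact s1
    have heach := (Finset.sum_eq_sum_iff_of_le fun t _ => (har t).1).1 hsum
    have : phi2 k β' < phi2 k β := by
      rw [e2, e4]
      refine lt_of_le_of_lt s2 (Finset.sum_lt_sum (fun t ht => ((har t).2 (heach t ht)).1)
        ⟨s, Finset.mem_univ s, ((har s).2 (heach s (Finset.mem_univ s))).2 (h2' true) (h2' false)⟩)
    rw [heq]
    omega

end RefStep

/-- refinement step: given a tree decomposition with adhesions of size
at most `k`, a node `s`, sets `Z₁, Z₂ ⊆ β(s)` with `|Z₁| = |Z₂| ≤ k+1`, a separation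
`(A₁,A₂)` with `Z₁ ⊆ A₁`, `Z₂ ⊆ A₂`, `|A₁ ∩ A₂| < |Z₁|`, and pairwise vertex-disjoint
`Z₁–Z₂` paths `(P_x)_{x ∈ A₁ ∩ A₂}` with `x ∈ V(P_x)`, there exists a tree
decomposition of `G` with adhesions of size at most `k`, at most `n+1` nodes, and
strictly smaller potential `Φ_{G,k}`. -/
theorem refinement_step
    {V ι : Type} [Fintype V] [Fintype ι] (G : SimpleGraph V) (k : ℕ)
    (T : SimpleGraph ι) (β : ι → Set V) (hdec : IsTreeDecomp G T β)
    (hadh : ∀ s t : ι, T.Adj s t → (β s ∩ β t).ncard ≤ k)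
    (s : ι) (Z₁ Z₂ : Set V) (hZ₁ : Z₁ ⊆ β s) (hZ₂ : Z₂ ⊆ β s)
    (hcard : Z₁.ncard = Z₂.ncard) (hsize : Z₁.ncard ≤ k + 1)
    (A₁ A₂ : Set V) (hsep : IsSeparation G A₁ A₂)
    (hZA₁ : Z₁ ⊆ A₁) (hZA₂ : Z₂ ⊆ A₂)
    (hord : (A₁ ∩ A₂).ncard < Z₁.ncard)
    (e₁ e₂ : (A₁ ∩ A₂ : Set V) → V)
    (P : ∀ x : (A₁ ∩ A₂ : Set V), G.Walk (e₁ x) (e₂ x))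
    (hpath : ∀ x : (A₁ ∩ A₂ : Set V), (P x).IsPath)
    (he₁ : ∀ x : (A₁ ∩ A₂ : Set V), e₁ x ∈ Z₁)
    (he₂ : ∀ x : (A₁ ∩ A₂ : Set V), e₂ x ∈ Z₂)
    (hthrough : ∀ x : (A₁ ∩ A₂ : Set V), (x : V) ∈ (P x).support)
    (hdisj : ∀ x y : (A₁ ∩ A₂ : Set V), x ≠ y →
      ∀ v : V, v ∈ (P x).support → v ∉ (P y).support) :
    ∃ (κ : Type) (_ : Fintype κ) (T' : SimpleGraph κ) (β' : κ → Set V),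
      IsTreeDecomp G T' β' ∧
      (∀ s' t' : κ, T'.Adj s' t' → (β' s' ∩ β' t').ncard ≤ k) ∧
      Nat.card κ ≤ Fintype.card V + 1 ∧
      phi (Fintype.card V) k β' < phi (Fintype.card V) k β := by
  classical
  obtain ⟨p, d, h, hp⟩ := RefStep.exists_rtd hdec s
  obtain ⟨hcov, hsp⟩ := hsep
  have hcov' : ∀ v, v ∈ A₁ ∨ v ∈ A₂ := fun v => by
    have : v ∈ A₁ ∪ A₂ := hcov ▸ Set.mem_univ v
    exact this
  have hse : ∀ u v, G.Adj u v → (u ∈ A₁ ∧ v ∈ A₁) ∨ (u ∈ A₂ ∧ v ∈ A₂) := by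
    intro u v huv
    have a1 := hsp u v huv
    have a2 := hsp v u huv.symm
    have a3 := hcov' u
    have a4 := hcov' v
    simp only [Set.mem_sdiff] at a1 a2
    tauto
  have hse' : ∀ u v, G.Adj u v → (u ∈ A₂ ∧ v ∈ A₂) ∨ (u ∈ A₁ ∧ v ∈ A₁) :=
    fun u v huv => (hse u v huv).symm
  have honly : ∀ x : (A₁ ∩ A₂ : Set V), ∀ v ∈ (P x).support, v ∈ A₁ ∩ A₂ → v = x := by
    intro x v hv hvX
    by_contra hne
    exact hdisj x ⟨v, hvX⟩ (fun e => hne (by rw [e])) v hv (hthrough ⟨v, hvX⟩)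
  have hinj : ∀ x y : (A₁ ∩ A₂ : Set V), ∀ v, v ∈ (P x).support → v ∈ (P y).support → x = y := by
    intro x y v hx hy
    by_contra hne
    exact hdisj x y hne v hx hy
  let A : Bool → Set V := fun b => if b then A₁ else A₂
  -- segments
  have hsegs : ∀ (b : Bool) (x : (A₁ ∩ A₂ : Set V)), ∃ (z : V) (q : G.Walk (x : V) z), z ∈ β s ∧
      ∀ v ∈ q.support, v ∈ (P x).support ∧ v ∈ A b := by
    intro b x
    cases b
    · obtain ⟨q, hq⟩ := RefStep.seg hse (P x) (hpath x) (hthrough x) (hZA₂ (he₂ x)) (honly x)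
      refine ⟨e₂ x, q, hZ₂ (he₂ x), fun v hv => ⟨(hq v hv).1, ?_⟩⟩
      show v ∈ A₂
      rcases (hq v hv).2 with e | e
      · rw [e]; exact x.2.2
      · exact (hcov' v).resolve_left e
    · obtain ⟨q, hq⟩ := RefStep.seg hse' (P x).reverse (hpath x).reverse
        (by simpa using hthrough x) (hZA₁ (he₁ x))
        (fun v hv hvX => honly x v (by simpa using hv) hvX.symm)
      refine ⟨e₁ x, q, hZ₁ (he₁ x), fun v hv => ⟨by simpa using (hq v hv).1, ?_⟩⟩
      show v ∈ A₁
      rcases (hq v hv).2 with e | e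
      · rw [e]; exact x.2.1
      · exact (hcov' v).resolve_right e
  refine RefStep.refine_core (A := A) (X := A₁ ∩ A₂) h
    (fun t ht => hadh t (p t) (hp t ht)) ?_ ?_ ?_ ?_ ?_ (by omega)
  · intro b v
    cases b
    · exact and_comm
    · exact Iff.rfl
  · intro b v
    cases b
    · exact (hcov' v).symm
    · exact hcov' v
  · intro u v huv
    rcases hse u v huv with hh | hh
    · exact ⟨true, hh⟩
    · exact ⟨false, hh⟩
  · intro b t ht
    have hex : ∀ x : V, ∃ v : V, ∀ hx : x ∈ A₁ ∩ A₂, x ∈ RefStep.UU s p β t →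
        v ∈ (P ⟨x, hx⟩).support ∧ v ∈ β t ∩ β (p t) ∩ A b := by
      intro x
      by_cases hx : x ∈ A₁ ∩ A₂ ∧ x ∈ RefStep.UU s p β t
      · obtain ⟨z, q, hz, hq⟩ := hsegs b ⟨x, hx.1⟩
        obtain ⟨v, hv, hv1, hv2⟩ := RefStep.sep_walk h ht q hx.2 hz
        exact ⟨v, fun _ _ => ⟨(hq v hv).1, ⟨hv1, hv2⟩, (hq v hv).2⟩⟩
      · exact ⟨x, fun h1 h2 => absurd ⟨h1, h2⟩ hx⟩
    choose g hg using hex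
    refine Set.ncard_le_ncard_of_injOn g (fun x hx => (hg x hx.1 hx.2).2) ?_
    intro x hx y hy hxy
    have := hinj ⟨x, hx.1⟩ ⟨y, hy.1⟩ (g x) (hg x hx.1 hx.2).1 (hxy ▸ (hg y hy.1 hy.2).1)
    exact congrArg Subtype.val this
  · intro b
    refine lt_of_lt_of_le hord ?_
    cases b
    · rw [hcard]
      exact Set.ncard_le_ncard fun v hv => ⟨hZ₂ hv, hZA₂ hv⟩
    · exact Set.ncard_le_ncard fun v hv => ⟨hZ₁ hv, hZA₁ hv⟩
end

section
/- Let G be a finite graph, let k ≥ 2 be an integer, and let S ⊆ V(G) be such that every connected component D of G − S satisfies |N_G(D)| ≤ k. Let H be the torso of S in G, and let (A,B) be a separation of G of order at most k. If every connected component of H[(A \ B) ∩ S] has at most k vertices, then every vertex v ∈ (A \ B) ∩ S has degree less than k² in H. -/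
/-- `D` is a connected component of the subgraph of `G` induced by `W`:
`D` is a nonempty connected subset of `W` closed under adjacency within `W`. -/
def IsComponentOf {V : Type} (G : SimpleGraph V) (W D : Set V) : Prop :=
  D.Nonempty ∧ D ⊆ W ∧ (G.induce D).Connected ∧
    ∀ u v : V, u ∈ D → v ∈ W → G.Adj u v → v ∈ D

/-- The (open) neighborhood of a vertex set `X` in `G`. -/
def nbhd {V : Type} (G : SimpleGraph V) (X : Set V) : Set V :=
  {v | v ∉ X ∧ ∃ u ∈ X, G.Adj u v}

/-- The torso of `S` in `G`: the graph on `S` (realized on vertex set `V`, with all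
edges inside `S`) where distinct `u, v ∈ S` are adjacent iff `uv ∈ E(G)` or some
connected component `D` of `G − S` has `u, v ∈ N_G(D)`. -/
def torso {V : Type} (G : SimpleGraph V) (S : Set V) : SimpleGraph V where
  Adj u v := u ≠ v ∧ u ∈ S ∧ v ∈ S ∧
    (G.Adj u v ∨ ∃ D : Set V, IsComponentOf G Sᶜ D ∧ u ∈ nbhd G D ∧ v ∈ nbhd G D)
  symm := by
    constructor
    rintro u v ⟨hne, hu, hv, h | ⟨D, hD, h1, h2⟩⟩
    · exact ⟨hne.symm, hv, hu, Or.inl h.symm⟩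
    · exact ⟨hne.symm, hv, hu, Or.inr ⟨D, hD, h2, h1⟩⟩
  loopless := ⟨fun u h => h.1 rfl⟩


lemma subset_of_closed {V : Type} (G : SimpleGraph V) (D P : Set V)
    (hD : (G.induce D).Connected) (x : V) (hx : x ∈ D) (hxP : x ∈ P)
    (hcl : ∀ u v : V, u ∈ D → u ∈ P → v ∈ D → G.Adj u v → v ∈ P) : D ⊆ P := by
  intro y hy
  obtain ⟨p⟩ := hD.preconnected ⟨x, hx⟩ ⟨y, hy⟩
  have key : ∀ (a b : D), (G.induce D).Walk a b → a.1 ∈ P → b.1 ∈ P := by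
    intro a b q
    induction q with
    | nil => exact id
    | cons h q ih =>
      intro ha
      exact ih (hcl _ _ (Subtype.property _) ha (Subtype.property _) h)
  exact key _ _ p hxP

lemma exists_component {V : Type} [Fintype V] (G : SimpleGraph V) (W : Set V) (v : V)
    (hv : v ∈ W) : ∃ C, v ∈ C ∧ IsComponentOf G W C := by
  have h0 : ({v} : Set V) ⊆ W ∧ (G.induce ({v} : Set V)).Connected := by
    refine ⟨by simpa using hv, ?_⟩
    have : Nonempty ({v} : Set V) := ⟨⟨v, rfl⟩⟩
    exact ⟨SimpleGraph.Preconnected.of_subsingleton⟩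
  obtain ⟨C, hle, hC⟩ := Finite.exists_le_maximal
    (p := fun C : Set V => C ⊆ W ∧ (G.induce C).Connected) h0
  have hvC : v ∈ C := hle rfl
  refine ⟨C, hvC, ⟨v, hvC⟩, hC.1.1, hC.1.2, ?_⟩
  intro a b ha hb hab
  have h2 : C ∪ {a, b} ⊆ W ∧ (G.induce (C ∪ {a, b})).Connected := by
    refine ⟨?_, G.induce_union_connected hC.1.2.preconnected
      (G.induce_pair_connected_of_adj hab).preconnected ⟨a, ha, by simp⟩⟩
    rintro x (hx | hx | hx)
    · exact hC.1.1 hx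
    · rw [hx]; exact hC.1.1 ha
    · rw [hx]; exact hb
  exact hC.2 h2 Set.subset_union_left (by simp)

lemma component_subset {V : Type} (G : SimpleGraph V) (W D E : Set V) (x : V)
    (hD : IsComponentOf G W D) (hE : IsComponentOf G W E) (hxD : x ∈ D) (hxE : x ∈ E) :
    D ⊆ E :=
  subset_of_closed G D E hD.2.2.1 x hxD hxE
    fun u v _ hu hv h => hE.2.2.2 u v hu (hD.2.1 hv) h

/-- if every component of `G − S` has at most `k` attachment vertices,
`(A,B)` is a separation of order at most `k`, and every connected component of
`H[(A \ B) ∩ S]` (where `H` is the torso of `S`) has at most `k` vertices, then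
every vertex of `(A \ B) ∩ S` has degree less than `k²` in `H`. -/
theorem degree_lt_of_small_components
    {V : Type} [Fintype V] (G : SimpleGraph V) (k : ℕ) (hk : 2 ≤ k)
    (S : Set V) (hS : ∀ D : Set V, IsComponentOf G Sᶜ D → (nbhd G D).ncard ≤ k)
    (A B : Set V) (hsep : IsSeparation G A B) (hord : (A ∩ B).ncard ≤ k)
    (hcomp : ∀ D : Set V, IsComponentOf (torso G S) ((A \ B) ∩ S) D → D.ncard ≤ k) :
    ∀ v ∈ (A \ B) ∩ S, ((torso G S).neighborSet v).ncard < k ^ 2 := by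
  classical
  intro v hv
  obtain ⟨C, hvC, hC⟩ := exists_component (torso G S) ((A \ B) ∩ S) v hv
  have hCk := hcomp C hC
  let f : V → Set V := fun x => {w | w ≠ v ∧ ((w = x ∧ x ∈ S) ∨
    ∃ D, IsComponentOf G Sᶜ D ∧ x ∈ D ∧ v ∈ nbhd G D ∧ w ∈ nbhd G D)}
  have hf : ∀ x, (f x).ncard ≤ k - 1 := by
    intro x
    by_cases hx : ∃ D, IsComponentOf G Sᶜ D ∧ x ∈ D ∧ v ∈ nbhd G D
    · obtain ⟨D, hD, hxD, hvD⟩ := hx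
      have hsub : f x ⊆ nbhd G D \ {v} := by
        rintro w ⟨hwv, ⟨_, hxS⟩ | ⟨E, hE, hxE, _, hw⟩⟩
        · exact absurd hxS (hD.2.1 hxD)
        · have : E = D := (component_subset G _ E D x hE hD hxE hxD).antisymm
            (component_subset G _ D E x hD hE hxD hxE)
          subst this
          exact ⟨hw, hwv⟩
      have h1 := Set.ncard_le_ncard hsub (Set.toFinite _)
      have h2 := Set.ncard_diff_singleton_of_mem hvD
      have h3 := hS D hD
      omega
    · have hsub : f x ⊆ {x} := by
        rintro w ⟨hwv, ⟨h, _⟩ | ⟨E, hE, hxE, hvE, _⟩⟩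
        · exact h
        · exact absurd ⟨E, hE, hxE, hvE⟩ hx
      have h1 := Set.ncard_le_ncard hsub (Set.toFinite _)
      rw [Set.ncard_singleton] at h1
      omega
  have hAB : ∀ w, w ∈ A ∨ w ∈ B := fun w => by
    have : w ∈ A ∪ B := hsep.1 ▸ Set.mem_univ w
    exact this
  have hsub : (torso G S).neighborSet v ⊆
      (C \ {v}) ∪ ⋃ x ∈ (A ∩ B).toFinset, f x := by
    intro w hw
    have hadj : (torso G S).Adj v w := hw
    obtain ⟨hne, -, hwS, hor⟩ := hw
    by_cases hwA : w ∈ A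
    · by_cases hwB : w ∈ B
      · right
        simp only [Set.mem_iUnion]
        exact ⟨w, by simp [hwA, hwB], hne.symm, Or.inl ⟨rfl, hwS⟩⟩
      · left
        exact ⟨hC.2.2.2 v w hvC ⟨⟨hwA, hwB⟩, hwS⟩ hadj, hne.symm⟩
    · have hwB : w ∈ B := (hAB w).resolve_left hwA
      right
      rcases hor with h | ⟨D, hD, hvD, hwD⟩
      · exact absurd ⟨hwB, hwA⟩ (hsep.2 v w h hv.1)
      · by_cases hx : ∃ x ∈ D, x ∈ A ∩ B
        · obtain ⟨x, hxD, hx⟩ := hx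
          simp only [Set.mem_iUnion]
          exact ⟨x, by simpa using hx, hne.symm, Or.inr ⟨D, hD, hxD, hvD, hwD⟩⟩
        · exfalso
          have step : ∀ u y, u ∈ A \ B → y ∈ D → G.Adj u y → y ∈ A \ B := by
            intro u y hu hy h
            have h1 := hsep.2 u y h hu
            have h2 := hAB y
            have h3 : ¬ (y ∈ A ∩ B) := fun h => hx ⟨y, hy, h⟩
            simp only [Set.mem_diff, Set.mem_inter_iff] at *
            tauto
          obtain ⟨-, a, haD, hav⟩ := hvD
          obtain ⟨-, b, hbD, hbw⟩ := hwD
          have hDA := subset_of_closed G D (A \ B) hD.2.2.1 a haD (step v a hv.1 haD hav.symm)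
            fun u y _ hu hy h => step u y hu hy h
          exact hsep.2 b w hbw (hDA hbD) ⟨hwB, hwA⟩
  have h1 := Set.ncard_le_ncard hsub (Set.toFinite _)
  have h2 := Set.ncard_union_le (C \ {v}) (⋃ x ∈ (A ∩ B).toFinset, f x)
  have h3 := Set.ncard_diff_singleton_of_mem hvC
  have h4 := Finset.set_ncard_biUnion_le (A ∩ B).toFinset f
  have h5 := Finset.sum_le_card_nsmul (A ∩ B).toFinset (fun x => (f x).ncard) (k - 1)
    (fun x _ => hf x)
  rw [← Set.ncard_eq_toFinset_card', smul_eq_mul] at h5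
  have h6 : (A ∩ B).ncard * (k - 1) ≤ k * (k - 1) := Nat.mul_le_mul_right _ hord
  obtain ⟨m, rfl⟩ : ∃ m, k = m + 1 := ⟨k - 1, by omega⟩
  simp only [Nat.add_sub_cancel] at *
  have h7 : (m + 1) ^ 2 = (m + 1) * m + m + 1 := by ring
  omega
end

section
/- Let G be a finite graph, let k be a nonnegative integer, let S ⊆ V(G) be such that every connected component D of G − S satisfies |N_G(D)| ≤ k, and let H be the torso of S in G. Let (A,B) be a separation of G of order at most k. Let S_A be a nonempty subset of (A \ B) ∩ S such that H[S_A] is connected, let S_B be a nonempty subset of (B \ A) ∩ S such that H[S_B] is connected, and let C be the set of all touched vertices of S that are not contained in S_A ∪ S_B. If f : S → {1,2,3} satisfies S_A ⊆ f⁻¹(1), C ⊆ f⁻¹(2), and S_B ⊆ f⁻¹(3), then the connected component of H[f⁻¹(1)] containing S_A is completely contained in (A \ B) ∩ S, and the connected component of H[f⁻¹(3)] containing S_B is completely contained in (B \ A) ∩ S. -/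
/-- A connected component `D` of `G − S` is touched (w.r.t. a separation `(A,B)`)
if `D ∩ A ∩ B ≠ ∅`. -/
def TouchedComp {V : Type} (G : SimpleGraph V) (S A B D : Set V) : Prop :=
  IsComponentOf G Sᶜ D ∧ (D ∩ (A ∩ B)).Nonempty

/-- A vertex `t ∈ S` is touched if `t ∈ A ∩ B` or `t ∈ N_G(D)` for some touched
component `D`. -/
def TouchedVertex {V : Type} (G : SimpleGraph V) (S A B : Set V) (t : V) : Prop :=
  t ∈ S ∧ (t ∈ A ∩ B ∨ ∃ D : Set V, TouchedComp G S A B D ∧ t ∈ nbhd G D)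

theorem conn_prop {V : Type} (G : SimpleGraph V) (D P : Set V) (hc : (G.induce D).Connected)
    (x : V) (hx : x ∈ D) (hxP : x ∈ P)
    (h : ∀ u v, u ∈ D → v ∈ D → G.Adj u v → u ∈ P → v ∈ P) : D ⊆ P := by
  intro y hy
  obtain ⟨w⟩ := hc.preconnected ⟨x, hx⟩ ⟨y, hy⟩
  have key : ∀ (a b : D), (G.induce D).Walk a b → a.1 ∈ P → b.1 ∈ P := by
    intro a b w
    induction w with
    | nil => exact id
    | cons hadj _ ih => exact fun ha => ih (h _ _ (Subtype.prop _) (Subtype.prop _) hadj ha)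
  exact key _ _ w hxP

theorem confined_half {V : Type} (G : SimpleGraph V) (S A B : Set V)
    (hsep : IsSeparation G A B) (SA SB : Set V)
    (hSA : SA ⊆ (A \ B) ∩ S) (hSAne : SA.Nonempty) (hSB : SB ⊆ (B \ A) ∩ S)
    (f : V → ℕ) (c : ℕ) (hc : c ≠ 2)
    (hfC : ∀ t : V, TouchedVertex G S A B t → t ∉ SA → t ∉ SB → f t = 2)
    (hfB : ∀ v ∈ SB, f v ≠ c) (D : Set V)
    (hD : IsComponentOf (torso G S) (S ∩ f ⁻¹' {c}) D) (hSAD : SA ⊆ D) :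
    D ⊆ (A \ B) ∩ S := by
  obtain ⟨hU, hE⟩ := hsep
  have hcov : ∀ x, x ∈ A ∨ x ∈ B := fun x => by
    have : x ∈ A ∪ B := hU ▸ Set.mem_univ x
    exact this
  obtain ⟨-, hDW, hDc, -⟩ := hD
  obtain ⟨a, ha⟩ := hSAne
  refine conn_prop _ _ _ hDc a (hSAD ha) (hSA ha) ?_
  rintro u v hu hv ⟨-, -, hvS, hadj⟩ ⟨huA, -⟩
  have hfv : f v = c := (hDW hv).2
  have hvSB : v ∉ SB := fun h => hfB v h hfv
  have hnt : v ∈ B → ¬ TouchedVertex G S A B v := fun hb ht =>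
    hc (hfv ▸ hfC v ht (fun h => (hSA h).1.2 hb) hvSB)
  refine ⟨?_, hvS⟩
  by_contra hcon
  have hvB : v ∈ B := by
    by_contra hb
    exact hcon ⟨(hcov v).resolve_right hb, hb⟩
  have hvA : v ∉ A := fun h => hnt hvB ⟨hvS, Or.inl ⟨h, hvB⟩⟩
  rcases hadj with hadj | ⟨K, hK, ⟨-, p, hp, hpu⟩, hvK⟩
  · exact hE u v hadj huA ⟨hvB, hvA⟩
  · have hKt : ∀ x ∈ K, x ∈ A → x ∈ B → False := fun x hx h1 h2 =>
      hnt hvB ⟨hvS, Or.inr ⟨K, ⟨hK, x, hx, h1, h2⟩, hvK⟩⟩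
    have step : ∀ x y, y ∈ K → G.Adj x y → x ∈ A \ B → y ∈ A \ B := by
      intro x y hy hxy hx
      have h1 := hE x y hxy hx
      have h2 := hKt y hy
      have h3 := hcov y
      simp only [Set.mem_diff] at h1 ⊢
      tauto
    have hsub : K ⊆ A \ B := conn_prop G K _ hK.2.2.1 p hp (step u p hp hpu.symm huA)
      (fun x y _ hy hxy hx => step x y hy hxy hx)
    obtain ⟨-, q, hq, hqv⟩ := hvK
    exact hE q v hqv (hsub hq) ⟨hvB, hvA⟩

/-- with `S_A ⊆ (A \ B) ∩ S` nonempty and connected in the torso `H`,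
`S_B ⊆ (B \ A) ∩ S` nonempty and connected in `H`, `C` the touched vertices outside
`S_A ∪ S_B`, and `f` a coloring with `S_A ⊆ f⁻¹(1)`, `C ⊆ f⁻¹(2)`, `S_B ⊆ f⁻¹(3)`:
the component of `H[f⁻¹(1)]` containing `S_A` lies in `(A \ B) ∩ S`, and the
component of `H[f⁻¹(3)]` containing `S_B` lies in `(B \ A) ∩ S`. -/
theorem component_of_coloring_confined
    {V : Type} [Fintype V] (G : SimpleGraph V) (k : ℕ)
    (S : Set V) (hS : ∀ D : Set V, IsComponentOf G Sᶜ D → (nbhd G D).ncard ≤ k)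
    (A B : Set V) (hsep : IsSeparation G A B) (hord : (A ∩ B).ncard ≤ k)
    (SA SB : Set V)
    (hSA : SA ⊆ (A \ B) ∩ S) (hSAne : SA.Nonempty)
    (hSAconn : ((torso G S).induce SA).Connected)
    (hSB : SB ⊆ (B \ A) ∩ S) (hSBne : SB.Nonempty)
    (hSBconn : ((torso G S).induce SB).Connected)
    (f : V → ℕ)
    (hfA : ∀ v ∈ SA, f v = 1)
    (hfC : ∀ t : V, TouchedVertex G S A B t → t ∉ SA ∪ SB → f t = 2)
    (hfB : ∀ v ∈ SB, f v = 3) :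
    (∀ D : Set V, IsComponentOf (torso G S) (S ∩ f ⁻¹' {1}) D → SA ⊆ D →
        D ⊆ (A \ B) ∩ S) ∧
    (∀ D : Set V, IsComponentOf (torso G S) (S ∩ f ⁻¹' {3}) D → SB ⊆ D →
        D ⊆ (B \ A) ∩ S) := by
  refine ⟨fun D hD h => confined_half G S A B hsep SA SB hSA hSAne hSB f 1 (by norm_num)
    (fun t ht h1 h2 => hfC t ht (fun h => h.elim h1 h2))
    (fun v hv => by rw [hfB v hv]; norm_num) D hD h,
    fun D hD h => confined_half G S B A ⟨by rw [Set.union_comm]; exact hsep.1,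
      fun u v huv hu hv => hsep.2 v u huv.symm hv hu⟩ SB SA hSB hSBne hSA f 3 (by norm_num)
    (fun t ht h1 h2 => hfC t ?_ (fun h => h.elim h2 h1))
    (fun v hv => by rw [hfA v hv]; norm_num) D hD h⟩
  obtain ⟨h1, ht⟩ := ht
  refine ⟨h1, ht.imp (fun h => ⟨h.2, h.1⟩) ?_⟩
  rintro ⟨K, ⟨hK, x, hx, hb, ha⟩, hn⟩
  exact ⟨K, ⟨hK, x, hx, ha, hb⟩, hn⟩
end

section
/- Let G be a finite graph, let k be a nonnegative integer, let S ⊆ V(G) be such that every connected component D of G − S satisfies |N_G(D)| ≤ k, and let (A,B) be a separation of G of order at most k. Then there are at most k touched components of G − S and at most k² touched vertices of S. -/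
theorem comp_subset {V : Type} (G : SimpleGraph V) (W D D' : Set V)
    (hD : IsComponentOf G W D) (hD' : IsComponentOf G W D') (x : V) (hx : x ∈ D)
    (hx' : x ∈ D') : D ⊆ D' := by
  intro y hy
  obtain ⟨p⟩ := hD.2.2.1.preconnected ⟨x, hx⟩ ⟨y, hy⟩
  have key : ∀ (a b : D), (G.induce D).Walk a b → (a : V) ∈ D' → (b : V) ∈ D' := by
    intro a b q
    induction q with
    | nil => exact id
    | @cons u v w h _ ih =>
      intro hu
      exact ih (hD'.2.2.2 _ _ hu (hD.2.1 v.2) (by simpa using h))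
  exact key _ _ p hx'

theorem comp_unique {V : Type} (G : SimpleGraph V) (W D D' : Set V)
    (hD : IsComponentOf G W D) (hD' : IsComponentOf G W D') (x : V) (hx : x ∈ D)
    (hx' : x ∈ D') : D = D' :=
  Set.Subset.antisymm (comp_subset G W D D' hD hD' x hx hx')
    (comp_subset G W D' D hD' hD x hx' hx)

/-- if every component of `G − S` has at most `k` attachment vertices
and `(A,B)` is a separation of `G` of order at most `k`, then there are at most `k`
touched components of `G − S` and at most `k²` touched vertices of `S`. -/
theorem touched_bounds
    {V : Type} [Fintype V] (G : SimpleGraph V) (k : ℕ)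
    (S : Set V) (hS : ∀ D : Set V, IsComponentOf G Sᶜ D → (nbhd G D).ncard ≤ k)
    (A B : Set V) (hsep : IsSeparation G A B) (hord : (A ∩ B).ncard ≤ k) :
    {D : Set V | TouchedComp G S A B D}.ncard ≤ k ∧
      {t : V | TouchedVertex G S A B t}.ncard ≤ k ^ 2 := by
  classical
  constructor
  · refine le_trans ?_ hord
    have hc : ∀ D : {D : Set V | TouchedComp G S A B D}, ∃ x : V, x ∈ D.1 ∩ (A ∩ B) :=
      fun D => D.2.2
    choose f hf using hc
    rw [← Nat.card_coe_set_eq, ← Nat.card_coe_set_eq]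
    refine Nat.card_le_card_of_injective
      (fun D => (⟨f D, (hf D).2⟩ : (A ∩ B : Set V))) ?_
    intro D D' h
    have h' : f D = f D' := congrArg Subtype.val h
    exact Subtype.ext (comp_unique G _ _ _ D.2.1 D'.2.1 (f D) (hf D).1 (h' ▸ (hf D').1))
  · let F : V → Set V := fun x =>
      {t | (x ∈ S ∧ t = x) ∨ ∃ D, IsComponentOf G Sᶜ D ∧ x ∈ D ∧ t ∈ nbhd G D}
    have hF : ∀ x ∈ A ∩ B, (F x).ncard ≤ k := by
      intro x hx
      have hk : 1 ≤ k := le_trans ((Set.ncard_pos (Set.toFinite _)).2 ⟨x, hx⟩) hord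
      by_cases hxS : x ∈ S
      · have : F x ⊆ {x} := by
          rintro t (⟨_, rfl⟩ | ⟨D, hD, hxD, _⟩)
          · rfl
          · exact absurd hxS (hD.2.1 hxD)
        exact (Set.ncard_le_ncard this (Set.toFinite _)).trans (by simpa using hk)
      · by_cases h : ∃ D, IsComponentOf G Sᶜ D ∧ x ∈ D
        · obtain ⟨D, hD, hxD⟩ := h
          have : F x ⊆ nbhd G D := by
            rintro t (⟨h, _⟩ | ⟨D', hD', hxD', ht⟩)
            · exact absurd h hxS
            · rwa [comp_unique G _ _ _ hD hD' x hxD hxD']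
          exact (Set.ncard_le_ncard this (Set.toFinite _)).trans (hS D hD)
        · have : F x ⊆ ∅ := by
            rintro t (⟨h, _⟩ | ⟨D', hD', hxD', ht⟩)
            · exact absurd h hxS
            · exact absurd ⟨D', hD', hxD'⟩ h
          exact (Set.ncard_le_ncard this (Set.toFinite _)).trans (by simp)
    have hsub : {t : V | TouchedVertex G S A B t} ⊆
        (((A ∩ B).toFinset.biUnion fun x => (F x).toFinset : Finset V) : Set V) := by
      rintro t ⟨htS, ht | ⟨D, ⟨hD, x, hxD, hx⟩, ht⟩⟩
      · simp only [Finset.coe_biUnion, Set.coe_toFinset, Set.mem_iUnion]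
        exact ⟨t, ht, Or.inl ⟨htS, rfl⟩⟩
      · simp only [Finset.coe_biUnion, Set.coe_toFinset, Set.mem_iUnion]
        exact ⟨x, hx, Or.inr ⟨D, hD, hxD, ht⟩⟩
    refine (Set.ncard_le_ncard hsub (Set.toFinite _)).trans ?_
    rw [Set.ncard_coe_finset, sq]
    refine (Finset.card_biUnion_le_card_mul _ _ k ?_).trans ?_
    · intro x hx
      rw [← Set.ncard_eq_toFinset_card']
      exact hF x (by simpa using hx)
    · rw [← Set.ncard_eq_toFinset_card']
      exact Nat.mul_le_mul_right _ hord
end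

section
/- Let G be a finite graph, let k be a nonnegative integer, let p be a positive integer, and let B ⊆ V(G) be a set with |B| > 3k that is (k,k)-edge-unbreakable in G. Then for every function f : V(G) → {1,…,p} whose cost in G is at most k, there exists j ∈ {1,…,p} such that at most k vertices v ∈ B satisfy f(v) ≠ j. -/
/-- An edge cut of a graph: a pair of disjoint vertex sets covering `V(G)`. -/
def IsEdgeCut {V : Type} (A B : Set V) : Prop :=
  Disjoint A B ∧ A ∪ B = Set.univ

/-- The order of an edge cut `(A,B)` in `G`. -/
noncomputable def edgeCutOrder {V : Type} (G : SimpleGraph V) (A B : Set V) : ℕ :=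
  {e : Sym2 V | ∃ u v : V, e = s(u, v) ∧ G.Adj u v ∧ u ∈ A ∧ v ∈ B}.ncard

/-- `S` is `(q,k)`-edge-unbreakable in `G`. -/
def IsEdgeUnbreakable {V : Type} (G : SimpleGraph V) (S : Set V) (q k : ℕ) : Prop :=
  ∀ A B : Set V, IsEdgeCut A B → edgeCutOrder G A B ≤ k →
    (A ∩ S).ncard ≤ q ∨ (B ∩ S).ncard ≤ q

/-- The cost of a function `f` on the vertices of `G`: the number of edges `uv` of
`G` with `f(u) ≠ f(v)`. -/
noncomputable def cutCost {V α : Type} (G : SimpleGraph V) (f : V → α) : ℕ :=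
  {e : Sym2 V | ∃ u v : V, e = s(u, v) ∧ G.Adj u v ∧ f u ≠ f v}.ncard

/-- if `B` has more than `3k` vertices and is `(k,k)`-edge-unbreakable
in `G`, then every `f : V(G) → {1,…,p}` of cost at most `k` has a majority value `j`
such that at most `k` vertices of `B` get a value other than `j`. -/
theorem majority_value_of_edgeUnbreakable
    {V : Type} [Fintype V] (G : SimpleGraph V) (k p : ℕ) (hp : 0 < p)
    (B : Set V) (hB : 3 * k < B.ncard)
    (hunb : IsEdgeUnbreakable G B k k)
    (f : V → Fin p) (hcost : cutCost G f ≤ k) :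
    ∃ j : Fin p, {v ∈ B | f v ≠ j}.ncard ≤ k := by
  classical
  have key : ∀ J : Set (Fin p), (f ⁻¹' J ∩ B).ncard ≤ k ∨ ((f ⁻¹' J)ᶜ ∩ B).ncard ≤ k := by
    intro J
    apply hunb
    · exact ⟨disjoint_compl_right, Set.union_compl_self _⟩
    · refine le_trans (Set.ncard_le_ncard ?_ (Set.toFinite _)) hcost
      rintro e ⟨u, v, he, ha, hu, hv⟩
      refine ⟨u, v, he, ha, ?_⟩
      intro h
      apply hv
      change f v ∈ J
      rw [← h]
      exact hu
  have hsum : ∀ J : Set (Fin p),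
      (f ⁻¹' J ∩ B).ncard + ((f ⁻¹' J)ᶜ ∩ B).ncard = B.ncard := by
    intro J
    have h := Set.ncard_inter_add_ncard_diff_eq_ncard B (f ⁻¹' J) (Set.toFinite _)
    rw [Set.diff_eq, Set.inter_comm B, Set.inter_comm B] at h
    exact h
  by_contra hne
  push Not at hne
  have hsing : ∀ j : Fin p, (f ⁻¹' {j} ∩ B).ncard ≤ k := by
    intro j
    rcases key {j} with h | h
    · exact h
    · exfalso
      have h2 := hne j
      have h3 : {v ∈ B | f v ≠ j} = (f ⁻¹' {j})ᶜ ∩ B := by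
        ext v
        simp [and_comm]
      rw [h3] at h2
      omega
  have hall : ∀ J : Finset (Fin p), (f ⁻¹' (J : Set (Fin p)) ∩ B).ncard ≤ k := by
    intro J
    induction J using Finset.induction_on with
    | empty => simp
    | insert j J _ ih =>
      have h1 : (f ⁻¹' ((insert j J : Finset (Fin p)) : Set (Fin p)) ∩ B).ncard
          ≤ (f ⁻¹' {j} ∩ B).ncard + (f ⁻¹' (J : Set (Fin p)) ∩ B).ncard := by
        refine le_trans (le_of_eq ?_) (Set.ncard_union_le _ _)
        congr 1
        ext v
        simp
        tauto
      have h2 := hsing j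
      have h3 := hsum ((insert j J : Finset (Fin p)) : Set (Fin p))
      rcases key ((insert j J : Finset (Fin p)) : Set (Fin p)) with h | h <;> omega
  have h := hall Finset.univ
  simp at h
  omega
end
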